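/- arXiv:0707.3615 — 4 statements merged into one kernel-verified Lean document; each statement's English description precedes it below -/
import Mathlib

section
/- The complete bipartite graph K_{3,2} is intrinsically S¹-linked: for every injective map f from the vertices of K_{3,2} into the circle S¹, there exist two disjoint edges {a,b} and {c,d} of K_{3,2} such that f(a) and f(b) lie in different connected components of S¹ \ {f(c), f(d)}. -/
/-!
Let `x₀, x₁, x₂` be the images of the part of size three and `p, q` those of the part of size two.
By pigeonhole two of the `xᵢ`, say `x` and `y`, lie on the same side of the chord `pq`. Writing
`D` for the orientation determinant, `D x q p` and `D y q p` then have the same sign, whereas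
`D x q y = - D y q x`. Hence either the chord `xq` strictly separates `p` from `y`, or the chord
`yq` strictly separates `p` from `x`. The linked edges are `xq, py` or `yq, px` respectively.

Two geometric facts are used: `D` does not vanish on three distinct points of the circle
(`orient_ne_zero`), and consequently points strictly on opposite sides of a chord lie in different
components of the circle minus the end points of the chord (`nonSplitLink_of_orient`).
-/

/-- `f a` and `f b` lie in different connected components of `S¹ \ {f c, f d}`. -/
def NonSplitLink {V : Type*} (f : V → Circle) (a b c d : V) : Prop :=
  connectedComponentIn ({f c, f d}ᶜ : Set Circle) (f a) ≠
    connectedComponentIn ({f c, f d}ᶜ : Set Circle) (f b)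

/-- A graph is intrinsically S¹-linked if for every S¹-embedding (injective map of its
vertices to the circle) there is a pair of disjoint edges forming a non-split link. -/
def IntrinsicallyS1Linked {V : Type*} (G : SimpleGraph V) : Prop :=
  ∀ f : V → Circle, Function.Injective f →
    ∃ a b c d : V, G.Adj a b ∧ G.Adj c d ∧
      ({a, b} : Set V) ∩ ({c, d} : Set V) = ∅ ∧
      NonSplitLink f a b c d

/-- The orientation determinant `det (q - p, r - p)` of three points of the circle, that is, twice
the signed area of the triangle `pqr`. -/
noncomputable def orient (p q r : Circle) : ℝ :=
  ((q : ℂ).re - (p : ℂ).re) * ((r : ℂ).im - (p : ℂ).im) -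
    ((q : ℂ).im - (p : ℂ).im) * ((r : ℂ).re - (p : ℂ).re)

lemma circle_sq (p : Circle) : (p : ℂ).re ^ 2 + (p : ℂ).im ^ 2 = 1 := by
  have h := Circle.normSq_coe p
  rw [Complex.normSq_apply] at h
  linarith

lemma dist_sq_ne_zero {p q : Circle} (h : p ≠ q) :
    ((p : ℂ).re - (q : ℂ).re) ^ 2 + ((p : ℂ).im - (q : ℂ).im) ^ 2 ≠ 0 := by
  intro h0
  apply h
  apply Circle.ext
  apply Complex.ext <;> nlinarith [sq_nonneg ((p : ℂ).re - (q : ℂ).re),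
    sq_nonneg ((p : ℂ).im - (q : ℂ).im)]

/-- A line meets the circle in at most two points. -/
lemma orient_ne_zero {p q r : Circle} (hpq : p ≠ q) (hpr : p ≠ r) (hqr : q ≠ r) :
    orient p q r ≠ 0 := by
  intro h
  unfold orient at h
  have hp := circle_sq p
  have hq := circle_sq q
  have hr := circle_sq r
  have npq := dist_sq_ne_zero hpq
  have npr := dist_sq_ne_zero hpr
  have nqr := dist_sq_ne_zero hqr
  generalize (p : ℂ).re = a at *
  generalize (p : ℂ).im = b at *
  generalize (q : ℂ).re = c at *
  generalize (q : ℂ).im = d at *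
  generalize (r : ℂ).re = e at *
  generalize (r : ℂ).im = g at *
  -- `r - p` is orthogonal to `r + p`, hence so is the parallel vector `q - p`.
  have h1 : ((c - a) * (e + a) + (d - b) * (g + b)) = 0 := by
    refine (mul_eq_zero.mp ?_).resolve_left npr
    linear_combination ((c - a) * (e - a) + (d - b) * (g - b)) * (hr - hp) +
      ((e - a) * (g + b) - (g - b) * (e + a)) * (-h)
  have h2 : (c - a) * (c - e) + (d - b) * (d - g) = 0 := by
    linear_combination hq - hp - h1
  -- `q - p` is both orthogonal and parallel to `q - r`.
  apply mul_ne_zero npq nqr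
  linear_combination ((c - a) * (c - e) + (d - b) * (d - g)) * h2 +
    ((c - a) * (g - b) - (d - b) * (e - a)) * h

lemma orient_self_right (p q : Circle) : orient p q q = 0 := by
  unfold orient; ring

lemma orient_self_left (p q : Circle) : orient p q p = 0 := by
  unfold orient; ring

/-- A connected set containing points on both sides of the line through `f c` and `f d` meets that
line, and on the circle it can only do so at `f c` or `f d`. -/
lemma nonSplitLink_of_orient {V : Type*} (f : V → Circle) {a b c d : V} (hcd : f c ≠ f d)
    (h : orient (f c) (f d) (f a) * orient (f c) (f d) (f b) < 0) : NonSplitLink f a b c d := by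
  intro heq
  have mem : ∀ v, orient (f c) (f d) (f v) ≠ 0 → f v ∈ ({f c, f d}ᶜ : Set Circle) := by
    rintro v hv (hvc | hvd)
    · rw [hvc] at hv; exact hv (orient_self_left _ _)
    · rw [Set.mem_singleton_iff.mp hvd] at hv; exact hv (orient_self_right _ _)
  have ha := mem_connectedComponentIn (mem a (left_ne_zero_of_mul h.ne))
  have hb := mem_connectedComponentIn (mem b (right_ne_zero_of_mul h.ne))
  rw [← heq] at hb
  have hcont : Continuous (orient (f c) (f d)) := by
    unfold orient
    have h1 : Continuous fun r : Circle => (r : ℂ).re :=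
      Complex.continuous_re.comp continuous_subtype_val
    have h2 : Continuous fun r : Circle => (r : ℂ).im :=
      Complex.continuous_im.comp continuous_subtype_val
    fun_prop
  have hpre : IsPreconnected (connectedComponentIn ({f c, f d}ᶜ : Set Circle) (f a)) :=
    isPreconnected_connectedComponentIn
  obtain ⟨r, hr, hr0⟩ : (0 : ℝ) ∈
      orient (f c) (f d) '' connectedComponentIn ({f c, f d}ᶜ : Set Circle) (f a) := by
    rcases mul_neg_iff.mp h with ⟨h1, h2⟩ | ⟨h1, h2⟩
    · exact hpre.intermediate_value hb ha hcont.continuousOn ⟨h2.le, h1.le⟩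
    · exact hpre.intermediate_value ha hb hcont.continuousOn ⟨h1.le, h2.le⟩
  have hr' := connectedComponentIn_subset _ _ hr
  simp only [Set.mem_compl_iff, Set.mem_insert_iff, Set.mem_singleton_iff, not_or] at hr'
  exact orient_ne_zero hcd (Ne.symm hr'.1) (Ne.symm hr'.2) hr0

lemma exists_same_side (s : Fin 3 → ℝ) (hs : ∀ i, s i ≠ 0) : ∃ i j, i ≠ j ∧ 0 < s i * s j := by
  obtain ⟨i, j, hij, h⟩ := Fintype.exists_ne_map_eq_of_card_lt (fun i => decide (0 < s i))
    (by simp)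
  refine ⟨i, j, hij, ?_⟩
  rcases (hs i).lt_or_gt with hi | hi <;> rcases (hs j).lt_or_gt with hj | hj
  · exact mul_pos_of_neg_of_neg hi hj
  · simp [hi.not_gt, hj] at h
  · simp [hi, hj.not_gt] at h
  · exact mul_pos hi hj

theorem K32_intrinsically_S1_linked :
    IntrinsicallyS1Linked (completeBipartiteGraph (Fin 3) (Fin 2)) := by
  intro f hf
  have hp : ∀ i : Fin 3, f (.inr 0) ≠ f (.inl i) := fun i => hf.ne (by simp)
  have hq : ∀ i : Fin 3, f (.inr 1) ≠ f (.inl i) := fun i => hf.ne (by simp)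
  have hpq : f (.inr 0) ≠ f (.inr 1) := hf.ne (by simp)
  obtain ⟨i, j, hij, hs⟩ := exists_same_side
    (fun i => orient (f (.inl i)) (f (.inr 1)) (f (.inr 0)))
    fun i => orient_ne_zero (hq i).symm (hp i).symm hpq.symm
  have hxy : f (.inl i) ≠ f (.inl j) := hf.ne (by simpa using hij)
  have hne := orient_ne_zero (hq i).symm hxy (hq j)
  have hanti : orient (f (.inl j)) (f (.inr 1)) (f (.inl i)) =
      - orient (f (.inl i)) (f (.inr 1)) (f (.inl j)) := by
    unfold orient; ring
  -- The product of the two separation products is negative, so one of them is.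
  have key : orient (f (.inl i)) (f (.inr 1)) (f (.inr 0)) *
        orient (f (.inl i)) (f (.inr 1)) (f (.inl j)) < 0 ∨
      orient (f (.inl j)) (f (.inr 1)) (f (.inr 0)) *
        orient (f (.inl j)) (f (.inr 1)) (f (.inl i)) < 0 := by
    rw [hanti]
    by_contra! hcon
    nlinarith [mul_nonneg hcon.1 hcon.2, mul_pos hs (sq_pos_of_ne_zero hne)]
  rcases key with h | h
  · refine ⟨.inr 0, .inl j, .inl i, .inr 1, by simp, by simp, ?_,
      nonSplitLink_of_orient f (hq i).symm h⟩
    ext v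
    simp only [Set.mem_inter_iff, Set.mem_insert_iff, Set.mem_singleton_iff]
    grind
  · refine ⟨.inr 0, .inl i, .inl j, .inr 1, by simp, by simp, ?_,
      nonSplitLink_of_orient f (hq j).symm h⟩
    ext v
    simp only [Set.mem_inter_iff, Set.mem_insert_iff, Set.mem_singleton_iff]
    grind
end

section
/- For every S¹-embedding f of the complete bipartite graph K_{3,2}, the number of unordered pairs of disjoint edges of K_{3,2} that form a non-split link in f is odd (equivalently, the sum over all pairs of disjoint edges of their mod 2 linking numbers is 1 mod 2). -/
/-- The set of unordered pairs of disjoint edges of `G` forming a non-split link in the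
S¹-embedding `f`. -/
def linkedPairs {V : Type*} (G : SimpleGraph V) (f : V → Circle) : Set (Sym2 (Sym2 V)) :=
  {p | ∃ a b c d : V, p = s(s(a, b), s(c, d)) ∧ G.Adj a b ∧ G.Adj c d ∧
    ({a, b} : Set V) ∩ ({c, d} : Set V) = ∅ ∧ NonSplitLink f a b c d}

open Set

/-- The open arc of the circle swept out by the angles strictly between `s` and `t`. -/
def circleArc (s t : ℝ) : Set Circle := Circle.exp '' Ioo s t

lemma isOpen_circleArc (s t : ℝ) : IsOpen (circleArc s t) :=
  isLocalHomeomorph_circleExp.isOpenMap _ isOpen_Ioo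

lemma isPreconnected_circleArc (s t : ℝ) : IsPreconnected (circleArc s t) :=
  isPreconnected_Ioo.image _ Circle.exp.continuous.continuousOn

lemma circleExp_ne {s t : ℝ} (h₁ : s < t) (h₂ : t < s + 2 * Real.pi) :
    Circle.exp t ≠ Circle.exp s := by
  intro h
  obtain ⟨m, hm⟩ := Circle.exp_eq_exp.1 h
  have hpi := Real.pi_pos
  have h0 : (0 : ℝ) < m := by
    by_contra hle
    nlinarith
  have h1 : (m : ℝ) < 1 := by
    by_contra hle
    nlinarith
  norm_cast at h0 h1
  lia

lemma disjoint_circleArc {s t : ℝ} : Disjoint (circleArc s t) (circleArc t (s + 2 * Real.pi)) := by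
  rw [Set.disjoint_left]
  rintro _ ⟨x, hx, rfl⟩ ⟨y, hy, hxy⟩
  exact circleExp_ne (hx.2.trans hy.1) (by linarith [hx.1, hy.2]) hxy

lemma circleArc_subset {u v : Circle} :
    circleArc (u : ℂ).arg (v : ℂ).arg ⊆ {u, v}ᶜ := by
  rintro _ ⟨x, hx, rfl⟩ hmem
  have hu := Complex.neg_pi_lt_arg (u : ℂ)
  have hv := Complex.arg_le_pi (v : ℂ)
  rcases hmem with h' | h'
  · rw [← Circle.exp_arg u] at h'
    exact circleExp_ne hx.1 (by linarith [hx.2]) h'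
  · rw [mem_singleton_iff, ← Circle.exp_arg v] at h'
    exact circleExp_ne hx.2 (by linarith [hx.1]) h'.symm

lemma circleArc_subset' {u v : Circle} (h : (u : ℂ).arg < (v : ℂ).arg) :
    circleArc (v : ℂ).arg ((u : ℂ).arg + 2 * Real.pi) ⊆ {u, v}ᶜ := by
  rintro _ ⟨x, hx, rfl⟩ hmem
  have hu := Complex.neg_pi_lt_arg (u : ℂ)
  have hv := Complex.arg_le_pi (v : ℂ)
  rcases hmem with h' | h'
  · rw [← Circle.exp_arg u] at h'
    exact circleExp_ne (h.trans hx.1) hx.2 h'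
  · rw [mem_singleton_iff, ← Circle.exp_arg v] at h'
    exact circleExp_ne hx.1 (by linarith [hx.2]) h'

/-- For `u` before `v`, the two arcs cover the complement of `{u, v}`. The second arc is described
by angles above `arg v`, so a point whose argument is below `arg u` is reached after a shift
by `2π`. -/
lemma mem_circleArc_cases {u v z : Circle} (hu : z ≠ u) (hv : z ≠ v) :
    ((u : ℂ).arg < (z : ℂ).arg ∧ (z : ℂ).arg < (v : ℂ).arg ∧
        z ∈ circleArc (u : ℂ).arg (v : ℂ).arg) ∨
      (¬((u : ℂ).arg < (z : ℂ).arg ∧ (z : ℂ).arg < (v : ℂ).arg) ∧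
        z ∈ circleArc (v : ℂ).arg ((u : ℂ).arg + 2 * Real.pi)) := by
  have hu' : (z : ℂ).arg ≠ (u : ℂ).arg := fun e => hu (Circle.arg_eq_arg.1 e)
  have hv' : (z : ℂ).arg ≠ (v : ℂ).arg := fun e => hv (Circle.arg_eq_arg.1 e)
  have h1 := Complex.neg_pi_lt_arg (u : ℂ)
  have h2 := Complex.arg_le_pi (v : ℂ)
  have h3 := Complex.neg_pi_lt_arg (z : ℂ)
  have h4 := Complex.arg_le_pi (z : ℂ)
  by_cases hb : (u : ℂ).arg < (z : ℂ).arg ∧ (z : ℂ).arg < (v : ℂ).arg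
  · exact Or.inl ⟨hb.1, hb.2, _, hb, Circle.exp_arg z⟩
  · refine Or.inr ⟨hb, ?_⟩
    rcases lt_or_gt_of_ne hu' with hlt | hgt
    · refine ⟨(z : ℂ).arg + 2 * Real.pi, ⟨by linarith, by linarith⟩, ?_⟩
      rw [Circle.periodic_exp, Circle.exp_arg]
    · have hvz : (v : ℂ).arg < (z : ℂ).arg :=
        lt_of_le_of_ne (not_lt.1 fun h => hb ⟨hgt, h⟩) hv'.symm
      exact ⟨_, ⟨hvz, by linarith⟩, Circle.exp_arg z⟩

lemma component_ne_of_mem {X : Type*} [TopologicalSpace X] {F A B : Set X} {z w : X}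
    (hA : IsOpen A) (hB : IsOpen B) (hd : Disjoint A B) (hF : F ⊆ A ∪ B)
    (hwF : w ∈ F) (hzF : z ∈ F) (hz : z ∈ A) (hw : w ∈ B) :
    connectedComponentIn F z ≠ connectedComponentIn F w := by
  intro h
  have hsub : connectedComponentIn F z ⊆ A :=
    isPreconnected_connectedComponentIn.subset_left_of_subset_union hA hB hd
      ((connectedComponentIn_subset F z).trans hF) ⟨z, mem_connectedComponentIn hzF, hz⟩
  have hwA : w ∈ A := hsub (h ▸ mem_connectedComponentIn hwF)
  exact Set.disjoint_left.1 hd hwA hw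

lemma component_eq_of_mem {X : Type*} [TopologicalSpace X] {F A : Set X} {z w : X}
    (hA : IsPreconnected A) (hF : A ⊆ F) (hz : z ∈ A) (hw : w ∈ A) :
    connectedComponentIn F z = connectedComponentIn F w :=
  connectedComponentIn_eq (hA.subset_connectedComponentIn hz hF hw)

lemma lt_iff_lt_iff_not_between {r s t : ℝ} (h : r < s) (ht : t ≠ s) :
    ((r < t ↔ s < t) ↔ ¬(r < t ∧ t < s)) := by
  grind

/-- The condition `u < z ↔ v < z` on arguments says that `z` is not between `u` and `v`; this form
is symmetric in `u` and `v`. -/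
lemma component_ne_iff {u v z w : Circle} (huv : u ≠ v) (hzu : z ≠ u) (hzv : z ≠ v)
    (hwu : w ≠ u) (hwv : w ≠ v) :
    connectedComponentIn ({u, v}ᶜ : Set Circle) z ≠ connectedComponentIn ({u, v}ᶜ : Set Circle) w ↔
      ¬(((u : ℂ).arg < (z : ℂ).arg ↔ (v : ℂ).arg < (z : ℂ).arg) ↔
        ((u : ℂ).arg < (w : ℂ).arg ↔ (v : ℂ).arg < (w : ℂ).arg)) := by
  wlog h : (u : ℂ).arg < (v : ℂ).arg generalizing u v
  · have huv' : (u : ℂ).arg ≠ (v : ℂ).arg := fun e => huv (Circle.arg_eq_arg.1 e)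
    have := this huv.symm hzv hzu hwv hwu (lt_of_le_of_ne (not_lt.1 h) huv'.symm)
    rw [Set.pair_comm, this, iff_comm (a := (v : ℂ).arg < (z : ℂ).arg),
      iff_comm (a := (v : ℂ).arg < (w : ℂ).arg)]
  have hnot : ∀ {y : Circle}, y ≠ v → (((u : ℂ).arg < (y : ℂ).arg ↔ (v : ℂ).arg < (y : ℂ).arg) ↔
      ¬((u : ℂ).arg < (y : ℂ).arg ∧ (y : ℂ).arg < (v : ℂ).arg)) := by
    intro y hy
    have hy' : (y : ℂ).arg ≠ (v : ℂ).arg := fun e => hy (Circle.arg_eq_arg.1 e)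
    exact lt_iff_lt_iff_not_between h hy'
  rw [hnot hzv, hnot hwv]
  have hcover : ({u, v}ᶜ : Set Circle) ⊆
      circleArc (u : ℂ).arg (v : ℂ).arg ∪ circleArc (v : ℂ).arg ((u : ℂ).arg + 2 * Real.pi) := by
    intro y hy
    simp only [mem_compl_iff, mem_insert_iff, mem_singleton_iff, not_or] at hy
    rcases mem_circleArc_cases hy.1 hy.2 with h' | h'
    · exact Or.inl h'.2.2
    · exact Or.inr h'.2
  have hzF : z ∈ ({u, v}ᶜ : Set Circle) := by simp [hzu, hzv]
  have hwF : w ∈ ({u, v}ᶜ : Set Circle) := by simp [hwu, hwv]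
  have hne := @component_ne_of_mem Circle _ _ _ _ (hA := isOpen_circleArc _ _)
    (hB := isOpen_circleArc _ _) (hd := disjoint_circleArc) (hF := hcover)
  rcases mem_circleArc_cases hzu hzv with hz | hz <;> rcases mem_circleArc_cases hwu hwv with hw | hw
  · have := component_eq_of_mem (isPreconnected_circleArc _ _) circleArc_subset hz.2.2 hw.2.2
    simp only [this, hz.1, hz.2.1, hw.1, hw.2.1, ne_eq, not_true_eq_false, and_self]
  · exact iff_of_true (hne _ _ hwF hzF hz.2.2 hw.2) fun e => e.2 hw.1 ⟨hz.1, hz.2.1⟩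
  · exact iff_of_true (hne _ _ hzF hwF hw.2.2 hz.2).symm fun e => e.1 hz.1 ⟨hw.1, hw.2.1⟩
  · have := component_eq_of_mem (isPreconnected_circleArc _ _) (circleArc_subset' h) hz.2 hw.2
    exact iff_of_false (not_not.2 this) (not_not.2 (iff_of_true hz.1 hw.1))

lemma nonSplitLink_iff {V : Type*} {f : V → Circle} (hf : Function.Injective f) {a b c d : V}
    (hcd : c ≠ d) (hac : a ≠ c) (had : a ≠ d) (hbc : b ≠ c) (hbd : b ≠ d) :
    NonSplitLink f a b c d ↔
      ¬(((f c : ℂ).arg < (f a : ℂ).arg ↔ (f d : ℂ).arg < (f a : ℂ).arg) ↔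
        ((f c : ℂ).arg < (f b : ℂ).arg ↔ (f d : ℂ).arg < (f b : ℂ).arg)) :=
  component_ne_iff (hf.ne hcd) (hf.ne hac) (hf.ne had) (hf.ne hbc) (hf.ne hbd)

lemma NonSplitLink.swap_left {V : Type*} {f : V → Circle} {a b c d : V}
    (h : NonSplitLink f a b c d) : NonSplitLink f b a c d := Ne.symm h

lemma NonSplitLink.swap_right {V : Type*} {f : V → Circle} {a b c d : V}
    (h : NonSplitLink f a b c d) : NonSplitLink f a b d c := by
  unfold NonSplitLink at *
  rwa [Set.pair_comm]

lemma NonSplitLink.swap_pairs {V : Type*} {f : V → Circle} (hf : Function.Injective f)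
    {a b c d : V} (hab : a ≠ b) (hcd : c ≠ d) (hac : a ≠ c) (had : a ≠ d) (hbc : b ≠ c)
    (hbd : b ≠ d) (h : NonSplitLink f a b c d) : NonSplitLink f c d a b := by
  rw [nonSplitLink_iff hf hcd hac had hbc hbd] at h
  rw [nonSplitLink_iff hf hab hac.symm hbc.symm had.symm hbd.symm]
  have key : ∀ {x y : V}, x ≠ y →
      ((f x : ℂ).arg < (f y : ℂ).arg ↔ ¬(f y : ℂ).arg < (f x : ℂ).arg) := by
    intro x y hxy
    have : (f x : ℂ).arg ≠ (f y : ℂ).arg := fun e => hxy (hf (Circle.arg_eq_arg.1 e))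
    rw [not_lt, this.le_iff_lt]
  rw [key hac, key hbc, key had, key hbd]
  tauto

open Sum in
/-- Every pair of disjoint edges of `K_{3,2}` is `{xᵢ, y₀}, {xⱼ, y₁}` for some `i ≠ j`. -/
lemma linkedPairs_eq_image (f : Fin 3 ⊕ Fin 2 → Circle) (hf : Function.Injective f) :
    linkedPairs (completeBipartiteGraph (Fin 3) (Fin 2)) f =
      (fun p : Fin 3 × Fin 3 => s(s(inl p.1, inr 0), s(inl p.2, inr 1))) ''
        {p | p.1 ≠ p.2 ∧ NonSplitLink f (inl p.1) (inr 0) (inl p.2) (inr 1)} := by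
  -- Edges written with the vertex of the 3-element part first.
  have main : ∀ (i j : Fin 3) (k l : Fin 2), i ≠ j → k ≠ l →
      NonSplitLink f (inl i) (inr k) (inl j) (inr l) →
      s(s(inl i, inr k), s(inl j, inr l)) ∈
        (fun p : Fin 3 × Fin 3 => s(s(inl p.1, inr 0), s(inl p.2, inr 1))) ''
          {p | p.1 ≠ p.2 ∧ NonSplitLink f (inl p.1) (inr 0) (inl p.2) (inr 1)} := by
    intro i j k l hij hkl h
    have hk : (k = 0 ∧ l = 1) ∨ (k = 1 ∧ l = 0) := by lia
    rcases hk with ⟨rfl, rfl⟩ | ⟨rfl, rfl⟩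
    · exact ⟨(i, j), ⟨hij, h⟩, rfl⟩
    · refine ⟨(j, i), ⟨hij.symm, ?_⟩, Sym2.eq_swap⟩
      exact h.swap_pairs hf (by simp) (by simp) (by simpa using hij) (by simp) (by simp) (by simp)
  ext p
  constructor
  · rintro ⟨a, b, c, d, rfl, hab, hcd, hdisj, h⟩
    have hne : a ≠ c ∧ a ≠ d ∧ b ≠ c ∧ b ≠ d := by
      refine ⟨?_, ?_, ?_, ?_⟩ <;> rintro rfl <;>
        simp [Set.eq_empty_iff_forall_notMem] at hdisj
    obtain ⟨hac, had, hbc, hbd⟩ := hne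
    rcases a with a | a <;> rcases b with b | b <;> simp at hab <;>
      rcases c with c | c <;> rcases d with d | d <;> simp at hcd <;>
      simp at hac had hbc hbd
    · exact main _ _ _ _ hac hbd h
    · rw [Sym2.eq_swap (a := inr c)]
      exact main _ _ _ _ had hbc h.swap_right
    · rw [Sym2.eq_swap (a := inr a)]
      exact main _ _ _ _ hbc had h.swap_left
    · rw [Sym2.eq_swap (a := inr a), Sym2.eq_swap (a := inr c)]
      exact main _ _ _ _ hbd hac h.swap_left.swap_right
  · rintro ⟨⟨i, j⟩, ⟨hij, h⟩, rfl⟩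
    refine ⟨_, _, _, _, rfl, by simp, by simp, ?_, h⟩
    ext x
    simp only [mem_inter_iff, mem_insert_iff, mem_singleton_iff, mem_empty_iff_false, iff_false]
    rintro ⟨rfl | rfl, h' | h'⟩ <;> simp at h' hij
    exact hij h'

theorem K32_odd_number_of_nonsplit_links
    (f : Fin 3 ⊕ Fin 2 → Circle) (hf : Function.Injective f) :
    Odd (linkedPairs (completeBipartiteGraph (Fin 3) (Fin 2)) f).ncard := by
  classical
  have hinj : Function.Injective (fun p : Fin 3 × Fin 3 =>
      (s(s(.inl p.1, .inr 0), s(.inl p.2, .inr 1)) : Sym2 (Sym2 (Fin 3 ⊕ Fin 2)))) := by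
    rintro ⟨i, j⟩ ⟨k, l⟩ h
    simpa using h
  rw [linkedPairs_eq_image f hf, Set.ncard_image_of_injective _ hinj, Set.ncard_eq_toFinset_card',
    Set.toFinset_ofPred, Finset.card_filter, ← ZMod.natCast_eq_one_iff_odd]
  -- The mod 2 linking number as a sum of order indicators.
  have link : ∀ i j : Fin 3, i ≠ j →
      (if NonSplitLink f (.inl i) (.inr 0) (.inl j) (.inr 1) then (1 : ZMod 2) else 0) =
        (if (f (.inl j) : ℂ).arg < (f (.inl i) : ℂ).arg then 1 else 0) +
        (if (f (.inr 1) : ℂ).arg < (f (.inl i) : ℂ).arg then 1 else 0) +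
        (if (f (.inl j) : ℂ).arg < (f (.inr 0) : ℂ).arg then 1 else 0) +
        (if (f (.inr 1) : ℂ).arg < (f (.inr 0) : ℂ).arg then 1 else 0) := by
    intro i j hij
    rw [nonSplitLink_iff hf (by simp) (by simpa using hij) (by simp) (by simp) (by simp)]
    split_ifs <;> first | rfl | (exfalso; tauto)
  have anti : ∀ i j : Fin 3, i ≠ j →
      (if (f (.inl j) : ℂ).arg < (f (.inl i) : ℂ).arg then (1 : ZMod 2) else 0) =
        1 + (if (f (.inl i) : ℂ).arg < (f (.inl j) : ℂ).arg then 1 else 0) := by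
    intro i j hij
    have hne : (f (.inl i) : ℂ).arg ≠ (f (.inl j) : ℂ).arg := fun e =>
      hij (by simpa using hf (Circle.arg_eq_arg.1 e))
    rcases lt_or_gt_of_ne hne with h | h
    · rw [if_neg h.not_gt, if_pos h]
      rfl
    · rw [if_pos h, if_neg h.not_gt]
      rfl
  have two : (2 : ZMod 2) = 0 := rfl
  push_cast
  simp only [ite_and, Fintype.sum_prod_type, Fin.sum_univ_three]
  simp only [ne_eq, not_true_eq_false, if_false, Fin.reduceEq, not_false_eq_true, if_true]
  rw [link 0 1 (by decide), link 0 2 (by decide), link 1 0 (by decide), link 1 2 (by decide),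
    link 2 0 (by decide), link 2 1 (by decide), anti 0 1 (by decide), anti 0 2 (by decide),
    anti 1 2 (by decide)]
  ring_nf
  simp [show (3 : ZMod 2) = 1 from rfl, show (6 : ZMod 2) = 0 from rfl, two]
end

section
/- Vertex expansion preserves intrinsic S¹-linking: if G is an intrinsically S¹-linked simple graph and G' is obtained from G by a vertex expansion, then G' is intrinsically S¹-linked. -/
/-- `G'` is obtained from `G` by expanding the vertex `v` into an edge, witnessed by
the projection map `φ`. -/
def IsVertexExpansion {V V' : Type*} (G : SimpleGraph V) (G' : SimpleGraph V')
    (φ : V' → V) (v : V) : Prop :=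
  Function.Surjective φ ∧
  (∃ v₁ v₂ : V', v₁ ≠ v₂ ∧ G'.Adj v₁ v₂ ∧ φ ⁻¹' {v} = {v₁, v₂}) ∧
  (∀ u : V, u ≠ v → ∃ x : V', φ ⁻¹' {u} = {x}) ∧
  (∀ a b : V, a ≠ b → (G.Adj a b ↔ ∃ x y : V', φ x = a ∧ φ y = b ∧ G'.Adj x y))

/-- Four points met in the order `0 < a < c < b < 2π` when turning from `r`: every preconnected set
containing `r` and the point at angle `c` contains the point at angle `a` or at angle `b`. The two closed arcs
with ends `a, b` cover the circle and meet only at their ends. -/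
lemma not_preconnected_of_interlaced (r : Circle) {a b c : ℝ} (ha : 0 < a) (hac : a < c)
    (hcb : c < b) (hb : b < 2 * Real.pi) {C : Set Circle} (hC : IsPreconnected C)
    (hr : r ∈ C) (hc : r * Circle.exp c ∈ C) (ha' : r * Circle.exp a ∉ C)
    (hb' : r * Circle.exp b ∉ C) : False := by
  have hcont : Continuous fun t : ℝ => r * Circle.exp t := by fun_prop
  have hclosed : ∀ x y : ℝ, IsClosed ((fun t : ℝ => r * Circle.exp t) '' Set.Icc x y) :=
    fun x y => (isCompact_Icc.image hcont).isClosed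
  obtain ⟨z, hzC, ⟨x, hx, rfl⟩, ⟨y, hy, hxy⟩⟩ := isPreconnected_closed_iff.1 hC _ _
    (hclosed a b) (hclosed b (a + 2 * Real.pi))
    (by
      intro z _
      obtain ⟨t, ht, htz⟩ :=
        Circle.periodic_exp.exists_mem_Ico Real.two_pi_pos (Complex.arg (r⁻¹ * z : Circle)) a
      have hz : r * Circle.exp t = z := by
        rw [← htz, Circle.exp_arg]; simp
      rcases le_total t b with h | h
      · exact Or.inl ⟨t, ⟨ht.1, h⟩, hz⟩
      · exact Or.inr ⟨t, ⟨h, ht.2.le⟩, hz⟩)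
    ⟨_, hc, c, ⟨hac.le, hcb.le⟩, rfl⟩
    ⟨r, hr, 2 * Real.pi, ⟨hb.le, by linarith⟩, by simp⟩
  obtain ⟨n, hn⟩ := Circle.exp_eq_exp.1 (mul_left_cancel hxy)
  have hpi := Real.two_pi_pos
  -- `0 ≤ y - x ≤ 2π`, so `n` is `0` (and `x = b`) or `1` (and `x = a`).
  have h0 : (-1 : ℝ) < n := by
    by_contra h
    nlinarith [hx.2, hy.1]
  have h1 : (n : ℝ) < 2 := by
    by_contra h
    nlinarith [hx.1, hy.2]
  have h0' : (-1 : ℤ) < n := by exact_mod_cast h0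
  have h1' : n < (2 : ℤ) := by exact_mod_cast h1
  obtain rfl | rfl : n = 0 ∨ n = 1 := by omega
  · have : x = b := le_antisymm hx.2 (by have := hy.1; simp at hn; linarith)
    exact hb' (this ▸ hzC)
  · have : x = a := le_antisymm (by have := hy.2; simp at hn; linarith) hx.1
    exact ha' (this ▸ hzC)

lemma exists_angle {r p : Circle} (h : p ≠ r) :
    ∃ a : ℝ, 0 < a ∧ a < 2 * Real.pi ∧ p = r * Circle.exp a := by
  obtain ⟨t, ht, htz⟩ :=
    Circle.periodic_exp.exists_mem_Ico Real.two_pi_pos (Complex.arg (r⁻¹ * p : Circle)) 0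
  have hz : r * Circle.exp t = p := by
    rw [← htz, Circle.exp_arg]; simp
  refine ⟨t, lt_of_le_of_ne ht.1 ?_, by simpa using ht.2, hz.symm⟩
  rintro rfl
  exact h (by simpa using hz.symm)

/-- If a preconnected set avoiding `p, q` contains `r, s`, then one avoiding `r, s` contains `p, q`. -/
lemma exists_arc_avoiding {p q r s : Circle} (hpr : p ≠ r) (hps : p ≠ s) (hqr : q ≠ r)
    (hqs : q ≠ s) (hsr : s ≠ r) {C : Set Circle} (hC : IsPreconnected C) (hr : r ∈ C)
    (hs : s ∈ C) (hp : p ∉ C) (hq : q ∉ C) :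
    ∃ D : Set Circle, IsPreconnected D ∧ p ∈ D ∧ q ∈ D ∧ r ∉ D ∧ s ∉ D := by
  obtain ⟨a, ha0, ha1, rfl⟩ := exists_angle hpr
  obtain ⟨b, hb0, hb1, rfl⟩ := exists_angle hqr
  obtain ⟨c, hc0, hc1, rfl⟩ := exists_angle hsr
  have hinj : ∀ x y : ℝ, 0 ≤ x → x < 2 * Real.pi → 0 ≤ y → y < 2 * Real.pi →
      r * Circle.exp x = r * Circle.exp y → x = y := by
    intro x y hx0 hx1 hy0 hy1 h
    obtain ⟨n, hn⟩ := Circle.exp_eq_exp.1 (mul_left_cancel h)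
    have hpi := Real.two_pi_pos
    have h0 : (-1 : ℝ) < n := by
      by_contra h
      nlinarith
    have h1 : (n : ℝ) < 1 := by
      by_contra h
      nlinarith
    have h0' : (-1 : ℤ) < n := by exact_mod_cast h0
    have h1' : n < (1 : ℤ) := by exact_mod_cast h1
    obtain rfl : n = 0 := by omega
    simpa using hn
  have hca : c ≠ a := fun h => hps (by rw [h])
  have hcb : c ≠ b := fun h => hqs (by rw [h])
  -- The arc of angles between `a` and `b` works, since `c` is not between them.
  refine ⟨(fun t : ℝ => r * Circle.exp t) '' Set.uIcc a b,
    isPreconnected_uIcc.image _ (by fun_prop), ⟨a, Set.left_mem_uIcc, rfl⟩,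
    ⟨b, Set.right_mem_uIcc, rfl⟩, ?_, ?_⟩
  · rintro ⟨t, ht, h⟩
    rw [Set.mem_uIcc] at ht
    have := hinj t 0 (by grind) (by grind) le_rfl Real.two_pi_pos (by simpa using h)
    grind
  · rintro ⟨t, ht, h⟩
    rw [Set.mem_uIcc] at ht
    obtain rfl := hinj t c (by grind) (by grind) hc0.le hc1 h
    rcases ht with ht | ht
    · exact not_preconnected_of_interlaced r ha0 (lt_of_le_of_ne ht.1 hca.symm)
        (lt_of_le_of_ne ht.2 hcb) hb1 hC hr hs hp hq
    · exact not_preconnected_of_interlaced r hb0 (lt_of_le_of_ne ht.1 hcb.symm)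
        (lt_of_le_of_ne ht.2 hca) ha1 hC hr hs hq hp

lemma nonSplitLink_symm {V : Type*} {f : V → Circle} (hf : Function.Injective f) {a b c d : V}
    (hac : a ≠ c) (had : a ≠ d) (hbc : b ≠ c) (hbd : b ≠ d)
    (hcd : c ≠ d) (h : NonSplitLink f a b c d) : NonSplitLink f c d a b := by
  intro heq
  obtain ⟨D, hD, haD, hbD, hcD, hdD⟩ := exists_arc_avoiding (hf.ne hac) (hf.ne had) (hf.ne hbc)
    (hf.ne hbd) (hf.ne hcd.symm)
    (isPreconnected_connectedComponentIn (x := f c) (F := ({f a, f b}ᶜ : Set Circle)))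
    (mem_connectedComponentIn (by simp [hf.eq_iff, hac.symm, hbc.symm]))
    (heq ▸ mem_connectedComponentIn (by simp [hf.eq_iff, had.symm, hbd.symm]))
    (fun h => connectedComponentIn_subset _ _ h (by simp))
    (fun h => connectedComponentIn_subset _ _ h (by simp))
  have hsub : D ⊆ ({f c, f d}ᶜ : Set Circle) := by
    rintro z hz (rfl | rfl)
    exacts [hcD hz, hdD hz]
  exact h (connectedComponentIn_eq (hD.subset_connectedComponentIn haD hsub hbD))

/-- An edge `ab` of `G` whose ends, lifted by the section `s`, have images in different components
of `F` yields an edge of `G'` over `{a, b}` with the same property. -/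
lemma exists_edge_of_component_ne {V V' : Type*} {G : SimpleGraph V} {G' : SimpleGraph V'}
    {φ : V' → V} {v : V} (hexp : IsVertexExpansion G G' φ v) {s : V → V'}
    (hs : ∀ u, φ (s u) = u) (f : V' → Circle) (F : Set Circle) {a b : V} (hab : G.Adj a b)
    (h : connectedComponentIn F (f (s a)) ≠ connectedComponentIn F (f (s b))) :
    ∃ x y : V', G'.Adj x y ∧ (φ x = a ∨ φ x = b) ∧ (φ y = a ∨ φ y = b) ∧
      connectedComponentIn F (f x) ≠ connectedComponentIn F (f y) := by
  obtain ⟨-, ⟨v₁, v₂, -, hadj, hfib⟩, hsing, hedge⟩ := hexp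
  have hfibre : ∀ x y : V', φ x = φ y → x ≠ y → G'.Adj x y := by
    intro x y hxy hne
    by_cases hx : φ x = v
    · have h1 : x ∈ φ ⁻¹' {v} := hx
      have h2 : y ∈ φ ⁻¹' {v} := hxy.symm.trans hx
      rw [hfib] at h1 h2
      rcases h1 with rfl | rfl <;> rcases h2 with rfl | rfl
      exacts [absurd rfl hne, hadj, hadj.symm, absurd rfl hne]
    · obtain ⟨z, hz⟩ := hsing _ hx
      have h1 : x ∈ φ ⁻¹' {φ x} := rfl
      have h2 : y ∈ φ ⁻¹' {φ x} := hxy.symm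
      rw [hz] at h1 h2
      exact absurd (h1.trans h2.symm) hne
  obtain ⟨x, y, hx, hy, hxy⟩ := (hedge a b hab.ne).1 hab
  by_cases h1 : connectedComponentIn F (f (s a)) = connectedComponentIn F (f x)
  · by_cases h2 : connectedComponentIn F (f x) = connectedComponentIn F (f y)
    · have h3 : connectedComponentIn F (f y) ≠ connectedComponentIn F (f (s b)) :=
        fun h3 => h (h1.trans (h2.trans h3))
      exact ⟨y, s b, hfibre _ _ (hy.trans (hs b).symm) (fun e => h3 (by rw [← e])),
        .inr hy, .inr (hs b), h3⟩
    · exact ⟨x, y, hxy, .inl hx, .inr hy, h2⟩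
  · exact ⟨s a, x, hfibre _ _ ((hs a).trans hx.symm) (fun e => h1 (by rw [← e])),
      .inl (hs a), .inl hx, h1⟩

theorem vertex_expansion_preserves_intrinsic_S1_linking
    {V V' : Type*} (G : SimpleGraph V) (G' : SimpleGraph V')
    (φ : V' → V) (v : V)
    (hexp : IsVertexExpansion G G' φ v)
    (hG : IntrinsicallyS1Linked G) :
    IntrinsicallyS1Linked G' := by
  intro f hf
  obtain ⟨s, hs⟩ := hexp.1.hasRightInverse
  obtain ⟨a, b, c, d, hab, hcd, hdisj, hlink⟩ := hG (f ∘ s) (hf.comp hs.injective)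
  have hne : ∀ p q : V', (φ p = a ∨ φ p = b) → (φ q = c ∨ φ q = d) → p ≠ q := by
    rintro p _ hp hq rfl
    exact (hdisj ▸ (⟨hp, hq⟩ : φ p ∈ ({a, b} : Set V) ∩ {c, d}) : φ p ∈ (∅ : Set V))
  have hc : φ (s c) = c ∨ φ (s c) = d := .inl (hs c)
  have hd : φ (s d) = c ∨ φ (s d) = d := .inr (hs d)
  obtain ⟨x, y, hxy, hx, hy, hl⟩ := exists_edge_of_component_ne hexp hs f _ hab hlink
  have hl' : NonSplitLink f (s c) (s d) x y :=
    nonSplitLink_symm hf (hne _ _ hx hc) (hne _ _ hx hd) (hne _ _ hy hc) (hne _ _ hy hd)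
      (hs.injective.ne hcd.ne) hl
  obtain ⟨z, w, hzw, hz, hw, hl''⟩ := exists_edge_of_component_ne hexp hs f _ hcd hl'
  refine ⟨z, w, x, y, hzw, hxy, ?_, hl''⟩
  rw [← Set.disjoint_iff_inter_eq_empty, Set.disjoint_left]
  rintro _ (rfl | rfl) (h | h)
  exacts [hne _ _ hx hz h.symm, hne _ _ hy hz h.symm, hne _ _ hx hw h.symm, hne _ _ hy hw h.symm]
end

section
/- Intrinsic S¹-linking is inherited from minors: if a simple graph H is a minor of a simple graph G and H is intrinsically S¹-linked, then G is intrinsically S¹-linked. -/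
/-- `H` is a minor of `G`: there are pairwise disjoint nonempty branch sets in `G`, one for
each vertex of `H`, each inducing a connected subgraph, such that every edge of `H` is
realized by an edge of `G` between the corresponding branch sets. -/
def IsMinor {W V : Type*} (H : SimpleGraph W) (G : SimpleGraph V) : Prop :=
  ∃ B : W → Set V,
    (∀ h, (B h).Nonempty) ∧
    (Pairwise fun h h' => Disjoint (B h) (B h')) ∧
    (∀ h, (G.induce (B h)).Connected) ∧
    (∀ h h', H.Adj h h' → ∃ u ∈ B h, ∃ u' ∈ B h', G.Adj u u')

lemma eq_of_induce_connected {V Y : Type*} {G : SimpleGraph V} {S : Set V}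
    (hS : (G.induce S).Connected) (g : V → Y)
    (hg : ∀ u ∈ S, ∀ v ∈ S, G.Adj u v → g u = g v) {x y : V} (hx : x ∈ S) (hy : y ∈ S) :
    g x = g y := by
  obtain ⟨p⟩ := hS.preconnected ⟨x, hx⟩ ⟨y, hy⟩
  suffices h : ∀ {u v : S}, (G.induce S).Walk u v → g u = g v from h p
  intro u v p
  induction p with
  | nil => rfl
  | cons hadj _ ih => exact (hg _ (Subtype.prop _) _ (Subtype.prop _) hadj).trans ih

/-- If `α < δ < β < γ + 2π` and `γ < α`, then `exp α` and `exp β` separate `exp γ` from `exp δ`: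
the closed arcs `[α, β]` and `[β, α + 2π]` cover the circle and meet only in these two points. -/
lemma circle_separated {α β γ δ : ℝ} (h1 : γ < α) (h2 : α < δ) (h3 : δ < β)
    (h4 : β < γ + 2 * Real.pi) :
    connectedComponentIn ({Circle.exp α, Circle.exp β}ᶜ : Set Circle) (Circle.exp γ) ≠
      connectedComponentIn ({Circle.exp α, Circle.exp β}ᶜ : Set Circle) (Circle.exp δ) := by
  intro heq
  have hinj : Set.InjOn Circle.exp (Set.Ico α (α + 2 * Real.pi)) :=
    Circle.exp_injOn_Ico (by linarith)
  have hmem : ∀ θ, α < θ → θ < α + 2 * Real.pi → θ ≠ β →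
      Circle.exp θ ∈ ({Circle.exp α, Circle.exp β}ᶜ : Set Circle) := by
    rintro θ ha hb hne (hθ | hθ)
    · exact ha.ne' (hinj ⟨ha.le, hb⟩ ⟨le_rfl, by linarith⟩ hθ)
    · exact hne (hinj ⟨ha.le, hb⟩ ⟨by linarith, by linarith⟩ hθ)
  have hγ : Circle.exp γ ∈ ({Circle.exp α, Circle.exp β}ᶜ : Set Circle) := by
    rw [← Circle.exp_add_two_pi γ]
    exact hmem (γ + 2 * Real.pi) (by linarith) (by linarith) h4.ne'
  have hδ := hmem δ h2 (by linarith) h3.ne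
  have hclosed : ∀ x y : ℝ, IsClosed (Circle.exp '' Set.Icc x y) := fun x y =>
    (isCompact_Icc.image Circle.exp.continuous).isClosed
  have key := isPreconnected_closed_iff.1
    (isPreconnected_connectedComponentIn
      (F := ({Circle.exp α, Circle.exp β}ᶜ : Set Circle)) (x := Circle.exp γ))
    (Circle.exp '' Set.Icc α β) (Circle.exp '' Set.Icc β (α + 2 * Real.pi))
    (hclosed _ _) (hclosed _ _) ?_ ?_ ?_
  · obtain ⟨x, hx, ⟨s, hs, rfl⟩, ⟨t, ht, hst⟩⟩ := key
    have hx' := connectedComponentIn_subset _ _ hx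
    have hsβ : s ≠ β := by rintro rfl; exact hx' (Or.inr rfl)
    have htα : t ≠ α + 2 * Real.pi := by
      rintro rfl
      rw [Circle.exp_add_two_pi] at hst
      exact hx' (Or.inl hst.symm)
    have := lt_of_le_of_ne hs.2 hsβ
    have := hinj ⟨by linarith [ht.1], lt_of_le_of_ne ht.2 htα⟩ ⟨hs.1, by linarith⟩ hst
    linarith [ht.1]
  · intro x _
    obtain ⟨θ, rfl⟩ := Circle.exp_surjective x
    obtain ⟨y, hy, hxy⟩ := Circle.periodic_exp.exists_mem_Ico Real.two_pi_pos θ α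
    rw [hxy]
    rcases le_total y β with h | h
    · exact Or.inl ⟨y, ⟨hy.1, h⟩, rfl⟩
    · exact Or.inr ⟨y, ⟨h, hy.2.le⟩, rfl⟩
  · exact ⟨Circle.exp δ, heq ▸ mem_connectedComponentIn hδ, δ, ⟨h2.le, h3.le⟩, rfl⟩
  · exact ⟨Circle.exp γ, mem_connectedComponentIn hγ, γ + 2 * Real.pi,
      ⟨h4.le, by linarith⟩, Circle.exp_add_two_pi γ⟩

/-- Linking of two disjoint pairs of distinct points on the circle is symmetric. -/
lemma circle_link_symm {a b c d : Circle} (hac : a ≠ c) (had : a ≠ d) (hbc : b ≠ c)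
    (hbd : b ≠ d) (hcd : c ≠ d)
    (h : connectedComponentIn ({c, d}ᶜ : Set Circle) a ≠
      connectedComponentIn ({c, d}ᶜ : Set Circle) b) :
    connectedComponentIn ({a, b}ᶜ : Set Circle) c ≠
      connectedComponentIn ({a, b}ᶜ : Set Circle) d := by
  obtain ⟨γ, rfl⟩ := Circle.exp_surjective c
  have hlift : ∀ x : Circle, x ≠ Circle.exp γ →
      ∃ θ, γ < θ ∧ θ < γ + 2 * Real.pi ∧ Circle.exp θ = x := by
    intro x hx
    obtain ⟨θ, rfl⟩ := Circle.exp_surjective x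
    obtain ⟨y, hy, hxy⟩ := Circle.periodic_exp.exists_mem_Ico Real.two_pi_pos θ γ
    refine ⟨y, lt_of_le_of_ne hy.1 ?_, hy.2, hxy.symm⟩
    rintro rfl
    exact hx hxy
  obtain ⟨α, hα, hα', rfl⟩ := hlift a hac
  obtain ⟨β, hβ, hβ', rfl⟩ := hlift b hbc
  obtain ⟨δ, hδ, hδ', rfl⟩ := hlift d hcd.symm
  have hinj : Set.InjOn Circle.exp (Set.Ico γ (γ + 2 * Real.pi)) :=
    Circle.exp_injOn_Ico (by linarith)
  -- An open arc avoiding the angles `γ` and `δ` lies in one component, so by `h` it cannot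
  -- contain both `α` and `β`.
  have harc : ∀ l u, γ ≤ l → u ≤ γ + 2 * Real.pi → δ ∉ Set.Ioo l u →
      α ∈ Set.Ioo l u → β ∈ Set.Ioo l u → False := by
    intro l u hl hu hδlu hαlu hβlu
    apply h
    apply connectedComponentIn_eq
    refine (isPreconnected_Ioo.image _ Circle.exp.continuous.continuousOn).subset_connectedComponentIn
      (Set.mem_image_of_mem _ hαlu) ?_ (Set.mem_image_of_mem _ hβlu)
    rintro _ ⟨θ, hθ, rfl⟩ (hθ' | hθ')
    · have := hinj ⟨by linarith [hθ.1], by linarith [hθ.2]⟩ ⟨le_rfl, by linarith⟩ hθ'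
      linarith [hθ.1]
    · have := hinj ⟨by linarith [hθ.1], by linarith [hθ.2]⟩ ⟨hδ.le, hδ'⟩ hθ'
      exact hδlu (this ▸ hθ)
  have hαδ : α ≠ δ := by rintro rfl; exact had rfl
  have hβδ : β ≠ δ := by rintro rfl; exact hbd rfl
  rcases lt_or_gt_of_ne hαδ with h1 | h1 <;> rcases lt_or_gt_of_ne hβδ with h2 | h2
  · exact (harc γ δ le_rfl hδ'.le (fun h => lt_irrefl _ h.2) ⟨hα, h1⟩ ⟨hβ, h2⟩).elim
  · exact circle_separated hα h1 h2 hβ'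
  · rw [Set.pair_comm]
    exact circle_separated hβ h2 h1 hα'
  · exact (harc δ _ hδ.le le_rfl (fun h => lt_irrefl _ h.1) ⟨h1, hα'⟩ ⟨h2, hβ'⟩).elim

/-- A function taking different values at points of two connected sets joined by an edge takes
different values at the ends of some edge inside the union of the two sets. -/
lemma exists_adj_ne_of_branch {V Y : Type*} {G : SimpleGraph V} {S T : Set V}
    (hS : (G.induce S).Connected) (hT : (G.induce T).Connected)
    (hST : ∃ u ∈ S, ∃ v ∈ T, G.Adj u v) (g : V → Y) {x y : V} (hx : x ∈ S) (hy : y ∈ T)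
    (hxy : g x ≠ g y) :
    ∃ a ∈ S ∪ T, ∃ b ∈ S ∪ T, G.Adj a b ∧ g a ≠ g b := by
  by_contra! hcon
  obtain ⟨u, hu, v, hv, huv⟩ := hST
  apply hxy
  calc g x = g u := eq_of_induce_connected hS g
        (fun a ha b hb => hcon a (Or.inl ha) b (Or.inl hb)) hx hu
    _ = g v := hcon u (Or.inl hu) v (Or.inr hv) huv
    _ = g y := eq_of_induce_connected hT g
        (fun a ha b hb => hcon a (Or.inr ha) b (Or.inr hb)) hv hy

theorem minor_preserves_intrinsic_S1_linking
    {W V : Type*} (H : SimpleGraph W) (G : SimpleGraph V)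
    (hminor : IsMinor H G) (hH : IntrinsicallyS1Linked H) :
    IntrinsicallyS1Linked G := by
  obtain ⟨B, hne, hdisj, hconn, hadj⟩ := hminor
  intro f hf
  choose r hr using hne
  have huniq : ∀ {v h k}, v ∈ B h → v ∈ B k → h = k := fun {v h k} hh hk => by
    by_contra hhk
    exact Set.disjoint_left.1 (hdisj hhk) hh hk
  have hrinj : Function.Injective r := fun h k hhk => huniq (hr h) (hhk ▸ hr k)
  obtain ⟨h, h', k, k', hh, hk, hhk, hlink⟩ := hH (f ∘ r) (hf.comp hrinj)
  have hsep : ∀ {v w}, v ∈ B h ∪ B h' → w ∈ B k ∪ B k' → v ≠ w := by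
    rintro v w hv hw rfl
    have hempty : ∀ x ∈ ({h, h'} : Set W), ∀ y ∈ ({k, k'} : Set W), x ≠ y := by
      rintro x hx y hy rfl
      exact Set.notMem_empty x (hhk ▸ ⟨hx, hy⟩)
    rcases hv with hv | hv <;> rcases hw with hw | hw
    all_goals exact hempty _ (by simp) _ (by simp) (huniq hv hw)
  -- Push the edge `hh'` of `H` to an edge `ab` of `G`, keeping the pair `r k, r k'`.
  obtain ⟨a, ha, b, hb, hab, hab'⟩ := exists_adj_ne_of_branch (hconn h) (hconn h')
    (hadj h h' hh)
    (fun v => connectedComponentIn ({f (r k), f (r k')}ᶜ : Set Circle) (f v)) (hr h) (hr h') hlink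
  have hrk : r k ∈ B k ∪ B k' := Or.inl (hr k)
  have hrk' : r k' ∈ B k ∪ B k' := Or.inr (hr k')
  have hsymm := circle_link_symm (hf.ne (hsep ha hrk)) (hf.ne (hsep ha hrk'))
    (hf.ne (hsep hb hrk)) (hf.ne (hsep hb hrk')) (hf.ne (hrinj.ne hk.ne)) hab'
  obtain ⟨c, hc, d, hd, hcd, hcd'⟩ := exists_adj_ne_of_branch (hconn k) (hconn k')
    (hadj k k' hk)
    (fun v => connectedComponentIn ({f a, f b}ᶜ : Set Circle) (f v)) (hr k) (hr k') hsymm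
  refine ⟨c, d, a, b, hcd, hab, ?_, hcd'⟩
  ext v
  simp only [Set.mem_inter_iff, Set.mem_insert_iff, Set.mem_singleton_iff, Set.mem_empty_iff_false,
    iff_false, not_and, not_or]
  rintro (rfl | rfl)
  · exact ⟨(hsep ha hc).symm, (hsep hb hc).symm⟩
  · exact ⟨(hsep ha hd).symm, (hsep hb hd).symm⟩
end
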